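/- The series ∑_{n=0}^∞ ζ(2n)/((2n+1)(2n+3)·16^n) equals -9ζ(3)/(16π²) + G/π - 12β(4)/π³, where G is Catalan's constant and β is the Dirichlet beta function. -/

import Mathlib

open Real

noncomputable def dirichletBeta (s : ℕ) : ℝ := ∑' n : ℕ, (-1) ^ n / (2 * (n : ℝ) + 1) ^ s

noncomputable def catalanConst : ℝ := ∑' n : ℕ, (-1) ^ n / (2 * (n : ℝ) + 1) ^ 2


noncomputable def zR (m : ℕ) : ℝ := ∑' k : ℕ, 1 / ((k : ℝ) + 1) ^ (2 * m + 2)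

noncomputable def kerH (u : ℝ) : ℝ := (1 - u ^ 2) / (π / 4 * sinc (π / 4 * u))

lemma summable_shift (s : ℕ) (hs : 1 < s) : Summable (fun k : ℕ => 1 / ((k : ℝ) + 1) ^ s) := by
  have := (summable_nat_add_iff 1).mpr (Real.summable_one_div_nat_pow.mpr hs)
  simpa using this

lemma zeta_eq_shift (s : ℕ) (hs : 1 < s) :
    riemannZeta s = ((∑' k : ℕ, 1 / ((k : ℝ) + 1) ^ s : ℝ) : ℂ) := by
  rw [zeta_nat_eq_tsum_of_gt_one hs]
  have h : Summable (fun k : ℕ => 1 / (k : ℝ) ^ s) := Real.summable_one_div_nat_pow.mpr hs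
  have h1 := h.tsum_eq_zero_add
  have : (∑' n : ℕ, 1 / (n : ℂ) ^ s) = ((∑' n : ℕ, 1 / (n : ℝ) ^ s : ℝ) : ℂ) := by
    push_cast; rfl
  rw [this, h1]
  have : s ≠ 0 := by omega
  simp [this]

lemma zR_nonneg (m : ℕ) : 0 ≤ zR m := tsum_nonneg fun k => by positivity

lemma zR_le (m : ℕ) : zR m ≤ zR 0 := by
  unfold zR
  refine Summable.tsum_le_tsum (fun k => ?_) (summable_shift _ (by omega)) (summable_shift _ (by omega))
  apply one_div_le_one_div_of_le (by positivity)
  apply pow_le_pow_right₀ _ (by omega)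
  have : (0:ℝ) ≤ k := by positivity
  linarith

lemma hasSum_zR (x : ℝ) (hx0 : 0 < x) (hx1 : x < 1) :
    HasSum (fun m => zR m * x ^ (2 * m + 2)) (∑' k : ℕ, x ^ 2 / (((k : ℝ) + 1) ^ 2 - x ^ 2)) := by
  have hx2 : x ^ 2 < 1 := by nlinarith
  have hs : Summable (fun p : ℕ × ℕ => 1 / ((p.2 : ℝ) + 1) ^ (2 * p.1 + 2) * x ^ (2 * p.1 + 2)) := by
    have h1 : Summable (fun m : ℕ => (x ^ 2) ^ m) := summable_geometric_of_lt_one (by positivity) hx2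
    have h2 := summable_shift 2 (by norm_num)
    refine Summable.of_nonneg_of_le (fun p => by positivity) (fun p => ?_)
      (h1.mul_of_nonneg h2 (fun _ => by positivity) (fun _ => by positivity))
    rw [mul_comm]
    simp only [← pow_mul]
    have hp : (1:ℝ) ≤ (p.2 : ℝ) + 1 := by have : (0:ℝ) ≤ p.2 := by positivity
                                          linarith
    apply mul_le_mul
    · exact pow_le_pow_of_le_one hx0.le hx1.le (by omega)
    · exact one_div_le_one_div_of_le (by positivity) (pow_le_pow_right₀ hp (by omega))
    · positivity
    · positivity
  have e1 : ∀ m, HasSum (fun k : ℕ => 1 / ((k : ℝ) + 1) ^ (2 * m + 2) * x ^ (2 * m + 2))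
      (zR m * x ^ (2 * m + 2)) := fun m =>
    ((summable_shift (2 * m + 2) (by omega)).hasSum).mul_right _
  have e2 : ∀ k : ℕ, HasSum (fun m : ℕ => 1 / ((k : ℝ) + 1) ^ (2 * m + 2) * x ^ (2 * m + 2))
      (x ^ 2 / (((k : ℝ) + 1) ^ 2 - x ^ 2)) := by
    intro k
    have hk : (1:ℝ) ≤ (k : ℝ) + 1 := by have : (0:ℝ) ≤ k := by positivity
                                        linarith
    have hk2 : (1:ℝ) ≤ ((k : ℝ) + 1) ^ 2 := one_le_pow₀ hk
    have hr : x ^ 2 / ((k : ℝ) + 1) ^ 2 < 1 := by rw [div_lt_one (by positivity)]; linarith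
    have := (hasSum_geometric_of_lt_one (by positivity) hr).mul_left (x ^ 2 / ((k : ℝ) + 1) ^ 2)
    convert! this using 1
    · ext m; simp only [pow_add, pow_mul, div_pow]; field_simp
    · have : ((k : ℝ) + 1) ^ 2 - x ^ 2 ≠ 0 := by linarith
      field_simp
  have h3 := hs.hasSum.prod_fiberwise e1
  have h4 := (hs.prod_symm.hasSum).prod_fiberwise e2
  have h5 : (∑' p : ℕ × ℕ, 1 / ((p.2 : ℝ) + 1) ^ (2 * p.1 + 2) * x ^ (2 * p.1 + 2)) =
     ∑' k : ℕ, x ^ 2 / (((k : ℝ) + 1) ^ 2 - x ^ 2) := by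
    rw [h4.tsum_eq]
    exact ((Equiv.prodComm ℕ ℕ).tsum_eq
      (fun p : ℕ × ℕ => 1 / ((p.2 : ℝ) + 1) ^ (2 * p.1 + 2) * x ^ (2 * p.1 + 2))).symm
  rwa [h5] at h3

lemma cot_sum (x : ℝ) (hx0 : 0 < x) (hx1 : x < 1) :
    (∑' k : ℕ, x ^ 2 / (((k : ℝ) + 1) ^ 2 - x ^ 2)) =
      1 / 2 - (π * x) * cos (π * x) / (2 * sin (π * x)) := by
  have hz : (x : ℂ) ∈ Complex.integerComplement := by
    rw [Complex.mem_integerComplement_iff]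
    rintro ⟨n, hn⟩
    have : (n : ℝ) = x := by exact_mod_cast hn
    rw [← this] at hx0 hx1
    have h1 : 0 < n := by exact_mod_cast hx0
    have h2 : n < 1 := by exact_mod_cast hx1
    omega
  have h := cot_series_rep' hz
  have hsin : sin (π * x) ≠ 0 := by
    apply (sin_pos_of_pos_of_lt_pi (by positivity) _).ne'
    nlinarith [pi_pos]
  have key : ∀ k : ℕ, (1 / ((x : ℂ) - (k + 1)) + 1 / ((x : ℂ) + (k + 1))) =
     ((-2 / x * (x ^ 2 / (((k : ℝ) + 1) ^ 2 - x ^ 2)) : ℝ) : ℂ) := by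
    intro k
    have hk : (0:ℝ) ≤ k := by positivity
    have a1 : x - (k + 1) ≠ 0 := by linarith
    have a2 : x + (k + 1) ≠ 0 := by linarith
    have a3 : ((k : ℝ) + 1) ^ 2 - x ^ 2 ≠ 0 := by nlinarith
    have : 1 / (x - (k + 1)) + 1 / (x + (k + 1)) = -2 / x * (x ^ 2 / (((k : ℝ) + 1) ^ 2 - x ^ 2)) := by
      rw [div_add_div _ _ a1 a2, div_mul_div_comm, div_eq_div_iff (mul_ne_zero a1 a2) (mul_ne_zero hx0.ne' a3)]
      ring
    rw [← this]; push_cast; rfl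
  rw [tsum_congr key, ← Complex.ofReal_tsum, tsum_mul_left, Complex.cot_eq_cos_div_sin] at h
  have h' : π * (cos (π * x) / sin (π * x)) - 1 / x =
     -2 / x * ∑' k : ℕ, x ^ 2 / (((k : ℝ) + 1) ^ 2 - x ^ 2) := by
    exact_mod_cast h
  generalize (∑' k : ℕ, x ^ 2 / (((k : ℝ) + 1) ^ 2 - x ^ 2)) = T at *
  field_simp at h' ⊢
  linarith

lemma sinc_pos' (u : ℝ) (h0 : 0 ≤ u) (h1 : u ≤ 1) : 0 < sinc (π / 4 * u) := by
  rcases h0.eq_or_lt with rfl | h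
  · simp
  · rw [sinc_of_ne_zero (by positivity)]
    have : 0 < sin (π / 4 * u) := sin_pos_of_pos_of_lt_pi (by positivity) (by nlinarith [pi_pos])
    positivity

lemma kerH_cont : ContinuousOn kerH (Set.Icc 0 1) := by
  unfold kerH
  refine ContinuousOn.div (by fun_prop) ?_ ?_
  · exact (continuous_const.mul (continuous_sinc.comp (by fun_prop))).continuousOn
  · intro u hu
    have := sinc_pos' u hu.1 hu.2
    positivity

lemma kerH_sin (u : ℝ) (h0 : 0 ≤ u) (h1 : u ≤ 1) : kerH u * sin (π / 4 * u) = u * (1 - u ^ 2) := by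
  have h2 := sinc_pos' u h0 h1
  unfold kerH
  rcases h0.eq_or_lt with rfl | h
  · simp
  · have h3 : sin (π / 4 * u) = (π / 4 * u) * sinc (π / 4 * u) := by
      rw [sinc_of_ne_zero (by positivity)]; field_simp
    rw [h3]
    generalize sinc (π / 4 * u) = t at *
    field_simp

lemma partI : HasSum (fun m : ℕ => zR m / 16 ^ (m + 1) * (1 / ((2 * m + 3) * (2 * m + 5))))
    (∫ u in (0:ℝ)..1, ((1 - u ^ 2) / 4 - π / 16 * (kerH u * cos (π / 4 * u)))) := by
  have key := intervalIntegral.hasSum_integral_of_dominated_convergence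
    (μ := MeasureTheory.volume) (a := (0:ℝ)) (b := 1)
    (F := fun (m : ℕ) u => zR m / 16 ^ (m + 1) * (u ^ (2 * m + 2) * (1 - u ^ 2) / 2))
    (f := fun u => ((1 - u ^ 2) / 4 - π / 16 * (kerH u * cos (π / 4 * u))))
    (fun m _ => zR 0 * (1 / 16) ^ m)
    (fun m => by
      apply Continuous.aestronglyMeasurable; fun_prop)
    (fun m => by
      refine Filter.Eventually.of_forall fun u hu => ?_
      rw [Set.uIoc_of_le zero_le_one] at hu
      obtain ⟨h0, h1⟩ := hu
      have hz := zR_nonneg m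
      have hq : 0 ≤ 1 - u ^ 2 := by nlinarith
      rw [Real.norm_of_nonneg (by positivity)]
      have a1 : u ^ (2 * m + 2) ≤ 1 := pow_le_one₀ h0.le h1
      have a2 : u ^ (2 * m + 2) * (1 - u ^ 2) / 2 ≤ 1 := by
        have : u ^ (2 * m + 2) * (1 - u ^ 2) ≤ 1 * 1 := by
          apply mul_le_mul a1 (by nlinarith) hq (by norm_num)
        linarith
      calc _ ≤ zR m / 16 ^ (m + 1) * 1 := by gcongr
        _ ≤ zR 0 / 16 ^ m * 1 := by
          gcongr
          · exact zR_nonneg 0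
          · exact zR_le m
          · norm_num
          · omega
        _ = _ := by rw [one_div, inv_pow]; ring)
    (Filter.Eventually.of_forall fun u hu =>
      (summable_geometric_of_lt_one (by norm_num) (by norm_num)).mul_left _)
    intervalIntegrable_const
    (Filter.Eventually.of_forall fun u hu => by
      rw [Set.uIoc_of_le zero_le_one] at hu
      obtain ⟨h0, h1⟩ := hu
      have h := (hasSum_zR (u / 4) (by positivity) (by linarith)).mul_right ((1 - u ^ 2) / 2)
      rw [cot_sum (u / 4) (by positivity) (by linarith)] at h
      convert! h using 1
      · ext m
        have : (16:ℝ) ^ (m + 1) = 4 ^ (2 * m + 2) := by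
          rw [show 2 * m + 2 = 2 * (m + 1) by ring, pow_mul]; norm_num
        rw [this, div_pow]; ring
      · have e : π * (u / 4) = π / 4 * u := by ring
        have hs : 0 < sin (π / 4 * u) :=
          sin_pos_of_pos_of_lt_pi (by positivity) (by nlinarith [pi_pos])
        have hk : kerH u = u * (1 - u ^ 2) / sin (π / 4 * u) := by
          rw [← kerH_sin u h0.le h1, mul_div_cancel_right₀ _ hs.ne']
        rw [hk, e]
        generalize sin (π / 4 * u) = t at *
        field_simp; ring)
  convert! key using 1
  ext m
  rw [intervalIntegral.integral_const_mul]
  congr 1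
  have : ∀ u : ℝ, u ^ (2 * m + 2) * (1 - u ^ 2) / 2 = (u ^ (2 * m + 2) - u ^ (2 * m + 4)) / 2 := by
    intro u; ring
  simp_rw [this]
  rw [intervalIntegral.integral_div, intervalIntegral.integral_sub (by simp) (by simp),
    integral_pow, integral_pow]
  push_cast
  simp
  field_simp
  ring

lemma kerH_RL : Filter.Tendsto (fun N : ℕ => ∫ u in (0:ℝ)..1, kerH u * cos ((2 * N + 1) * (π / 4 * u)))
    Filter.atTop (nhds 0) := by
  have h := Real.tendsto_integral_exp_smul_cocompact
    (Set.indicator (Set.Ioc (0:ℝ) 1) (fun u => (kerH u : ℂ)))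
  have hw : Filter.Tendsto (fun N : ℕ => (2 * (N:ℝ) + 1) / 8) Filter.atTop (Filter.cocompact ℝ) := by
    refine Filter.Tendsto.mono_right ?_ atTop_le_cocompact
    apply Filter.Tendsto.atTop_div_const (by norm_num)
    apply Filter.tendsto_atTop_add_const_right
    exact Filter.Tendsto.const_mul_atTop (by norm_num) tendsto_natCast_atTop_atTop
  have h2 := (Complex.continuous_re.tendsto 0).comp (h.comp hw)
  simp only [Complex.zero_re] at h2
  convert! h2 using 1
  ext N
  simp only [Function.comp]
  have hind : ∀ v : ℝ, Real.fourierChar (-(v * ((2 * (N:ℝ) + 1) / 8))) •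
      Set.indicator (Set.Ioc (0:ℝ) 1) (fun u => (kerH u : ℂ)) v =
      Set.indicator (Set.Ioc (0:ℝ) 1)
        (fun u => Real.fourierChar (-(u * ((2 * (N:ℝ) + 1) / 8))) • (kerH u : ℂ)) v := by
    intro v
    by_cases hv : v ∈ Set.Ioc (0:ℝ) 1 <;> simp [hv]
  simp_rw [hind]
  rw [MeasureTheory.integral_indicator measurableSet_Ioc, intervalIntegral.integral_of_le zero_le_one]
  have hint : MeasureTheory.IntegrableOn
      (fun u : ℝ => Real.fourierChar (-(u * ((2 * (N:ℝ) + 1) / 8))) • (kerH u : ℂ)) (Set.Ioc 0 1) := by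
    refine MeasureTheory.IntegrableOn.mono_set ?_ Set.Ioc_subset_Icc_self
    apply ContinuousOn.integrableOn_Icc
    have := kerH_cont
    simp only [Circle.smul_def, Real.fourierChar_apply, smul_eq_mul]
    refine ContinuousOn.mul ?_ ?_
    · exact Continuous.continuousOn (by fun_prop)
    · exact Complex.continuous_ofReal.comp_continuousOn this
  have := Complex.reCLM.integral_comp_comm hint
  simp only [Complex.reCLM_apply] at this
  rw [← this]
  congr 1
  ext u
  simp only [Circle.smul_def, Real.fourierChar_apply, smul_eq_mul, Complex.re_mul_ofReal]
  rw [Complex.exp_ofReal_mul_I_re, mul_comm, ← Real.cos_neg]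
  congr 2
  ring

lemma telescoping (N : ℕ) (u : ℝ) (h0 : 0 ≤ u) (h1 : u ≤ 1) :
    kerH u * cos (π / 4 * u) =
      2 * ∑ k ∈ Finset.range (N + 1), u * (1 - u ^ 2) * sin (k * π / 2 * u)
        + kerH u * cos ((2 * N + 1) * (π / 4 * u)) := by
  induction N with
  | zero => simp
  | succ n ih =>
    rw [ih, Finset.sum_range_succ _ (n + 1), ← kerH_sin u h0 h1]
    have e1 : (2 * (n:ℝ) + 1) * (π / 4 * u) = ((n + 1 : ℕ) : ℝ) * π / 2 * u - π / 4 * u := by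
      push_cast; ring
    have e2 : (2 * ((n + 1 : ℕ):ℝ) + 1) * (π / 4 * u) = ((n + 1 : ℕ) : ℝ) * π / 2 * u + π / 4 * u := by
      push_cast; ring
    rw [e1, e2, cos_sub, cos_add]
    ring

noncomputable def coefI (k : ℕ) : ℝ := -2 * sin (k * π / 2) / (k * π / 2) ^ 2
    - 6 * cos (k * π / 2) / (k * π / 2) ^ 3 + 6 * sin (k * π / 2) / (k * π / 2) ^ 4

lemma integral_coef (k : ℕ) : ∫ u in (0:ℝ)..1, u * (1 - u ^ 2) * sin (k * π / 2 * u) = coefI k := by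
  rcases Nat.eq_zero_or_pos k with rfl | hk
  · simp [coefI]
  have hc : (0:ℝ) < k * π / 2 := by have : (0:ℝ) < k := by exact_mod_cast hk
                                    positivity
  unfold coefI
  generalize (k : ℝ) * π / 2 = c at *
  have hd : ∀ u ∈ Set.uIcc (0:ℝ) 1, HasDerivAt (fun u => -(u * (1 - u ^ 2)) * cos (c * u) / c
      + (1 - 3 * u ^ 2) * sin (c * u) / c ^ 2 - 6 * u * cos (c * u) / c ^ 3 + 6 * sin (c * u) / c ^ 4)
      (u * (1 - u ^ 2) * sin (c * u)) u := by
    intro u _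
    have hcu : HasDerivAt (fun u : ℝ => c * u) c u := by
      simpa using (hasDerivAt_id u).const_mul c
    have hs := hcu.sin
    have hco := hcu.cos
    have i := hasDerivAt_id' u
    have p1 := (i.mul ((i.pow 2).const_sub 1)).neg
    have p2 := (((i.pow 2).const_mul 3).const_sub 1)
    have p3 := i.const_mul 6
    have := ((((p1.mul hco).div_const c).add ((p2.mul hs).div_const (c ^ 2))).sub
      ((p3.mul hco).div_const (c ^ 3))).add ((hs.const_mul 6).div_const (c ^ 4))
    convert! this using 1
    simp
    field_simp
    ring
  rw [intervalIntegral.integral_eq_sub_of_hasDerivAt hd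
    (Continuous.intervalIntegrable (by fun_prop) _ _)]
  simp
  ring

lemma partial_tendsto : Filter.Tendsto (fun N : ℕ => 2 * ∑ k ∈ Finset.range (N + 1), coefI k)
    Filter.atTop (nhds (∫ u in (0:ℝ)..1, kerH u * cos (π / 4 * u))) := by
  have h := (tendsto_const_nhds (x := ∫ u in (0:ℝ)..1, kerH u * cos (π / 4 * u))).sub kerH_RL
  rw [sub_zero] at h
  refine h.congr fun N => ?_
  have hi : ∀ k ∈ Finset.range (N + 1), IntervalIntegrable
      (fun u : ℝ => u * (1 - u ^ 2) * sin (k * π / 2 * u)) MeasureTheory.volume 0 1 := fun k _ =>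
    Continuous.intervalIntegrable (by fun_prop) _ _
  have hk : IntervalIntegrable (fun u => kerH u * cos ((2 * N + 1) * (π / 4 * u)))
      MeasureTheory.volume 0 1 := by
    apply ContinuousOn.intervalIntegrable
    rw [Set.uIcc_of_le zero_le_one]
    exact kerH_cont.mul (Continuous.continuousOn (by fun_prop))
  have : (∫ u in (0:ℝ)..1, kerH u * cos (π / 4 * u)) =
     ∫ u in (0:ℝ)..1, (2 * ∑ k ∈ Finset.range (N + 1), u * (1 - u ^ 2) * sin (k * π / 2 * u)
        + kerH u * cos ((2 * N + 1) * (π / 4 * u))) := by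
    apply intervalIntegral.integral_congr
    intro u hu
    rw [Set.uIcc_of_le zero_le_one] at hu
    exact telescoping N u hu.1 hu.2
  rw [this, intervalIntegral.integral_add _ hk, intervalIntegral.integral_const_mul,
    intervalIntegral.integral_finsetSum hi]
  · simp_rw [integral_coef]; ring
  · exact Continuous.intervalIntegrable (by fun_prop) _ _

lemma hasSum_odd_part (s : ℕ) (hs : 1 < s) :
    HasSum (fun k : ℕ => sin (k * π / 2) / (k : ℝ) ^ s) (dirichletBeta s) := by
  have hsum : Summable (fun n : ℕ => (-1) ^ n / (2 * (n : ℝ) + 1) ^ s) := by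
    have h1 : Summable (fun n : ℕ => 1 / ((2 * n + 1 : ℕ) : ℝ) ^ s) :=
      (Real.summable_one_div_nat_pow.mpr hs).comp_injective (i := fun n : ℕ => 2 * n + 1)
        (fun a b h => by simpa using h)
    refine Summable.of_norm ?_
    convert! h1 using 1
    ext n
    rw [norm_div, norm_pow, norm_pow, norm_neg, norm_one, one_pow,
      Real.norm_of_nonneg (by positivity)]
    push_cast; rfl
  have he : HasSum (fun k : ℕ => sin ((2 * k : ℕ) * π / 2) / ((2 * k : ℕ) : ℝ) ^ s) 0 := by
    convert! hasSum_zero using 1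
    ext k
    have : ((2 * k : ℕ) : ℝ) * π / 2 = k * π := by push_cast; ring
    rw [this, sin_nat_mul_pi, zero_div]
  have ho : HasSum (fun k : ℕ => sin ((2 * k + 1 : ℕ) * π / 2) / ((2 * k + 1 : ℕ) : ℝ) ^ s)
      (dirichletBeta s) := by
    convert! hsum.hasSum using 1
    ext k
    have : ((2 * k + 1 : ℕ) : ℝ) * π / 2 = k * π + π / 2 := by push_cast; ring
    rw [this, sin_add_pi_div_two, cos_nat_mul_pi]
    push_cast; rfl
  simpa using HasSum.even_add_odd (f := fun k : ℕ => sin (k * π / 2) / (k : ℝ) ^ s) he ho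

lemma hasSum_even_part :
    HasSum (fun k : ℕ => cos (k * π / 2) / (k : ℝ) ^ 3)
      (-3 / 32 * ∑' k : ℕ, 1 / (k : ℝ) ^ 3) := by
  have hA : Summable (fun n : ℕ => 1 / (n : ℝ) ^ 3) := Real.summable_one_div_nat_pow.mpr (by norm_num)
  set A := ∑' k : ℕ, 1 / (k : ℝ) ^ 3 with hAdef
  have h1 : HasSum (fun n : ℕ => 1 / ((2 * n : ℕ) : ℝ) ^ 3) (A / 8) := by
    convert! hA.hasSum.div_const 8 using 1
    ext n; push_cast; rw [mul_pow, div_div]; norm_num; ring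
  have h2s : Summable (fun n : ℕ => 1 / ((2 * n + 1 : ℕ) : ℝ) ^ 3) :=
    hA.comp_injective (i := fun n : ℕ => 2 * n + 1) (fun a b h => by simpa using h)
  have h2 : HasSum (fun n : ℕ => 1 / ((2 * n + 1 : ℕ) : ℝ) ^ 3) (7 * A / 8) := by
    have := HasSum.even_add_odd (f := fun n : ℕ => 1 / (n : ℝ) ^ 3) h1 h2s.hasSum
    have e := this.tsum_eq
    rw [← hAdef] at e
    have : 7 * A / 8 = ∑' n : ℕ, 1 / ((2 * n + 1 : ℕ) : ℝ) ^ 3 := by linarith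
    rw [this]; exact h2s.hasSum
  have h3 : HasSum (fun n : ℕ => (-1) ^ n / (n : ℝ) ^ 3) (A / 8 + -(7 * A / 8)) := by
    apply HasSum.even_add_odd
    · convert! h1 using 1
      ext n; simp
    · convert! h2.neg using 1
      ext n; rw [pow_succ, pow_mul]; norm_num; ring
  have he : HasSum (fun k : ℕ => cos ((2 * k : ℕ) * π / 2) / ((2 * k : ℕ) : ℝ) ^ 3)
      (-3 / 32 * A) := by
    convert! h3.div_const 8 using 1
    · ext k
      have : ((2 * k : ℕ) : ℝ) * π / 2 = k * π := by push_cast; ring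
      rw [this, cos_nat_mul_pi]
      push_cast; rw [mul_pow, div_div]; norm_num; ring
    · ring
  have ho : HasSum (fun k : ℕ => cos ((2 * k + 1 : ℕ) * π / 2) / ((2 * k + 1 : ℕ) : ℝ) ^ 3) 0 := by
    convert! hasSum_zero using 1
    ext k
    have : ((2 * k + 1 : ℕ) : ℝ) * π / 2 = k * π + π / 2 := by push_cast; ring
    rw [this, cos_add_pi_div_two, sin_nat_mul_pi]; simp
  simpa using HasSum.even_add_odd (f := fun k : ℕ => cos (k * π / 2) / (k : ℝ) ^ 3) he ho

lemma integral_value : (∫ u in (0:ℝ)..1, kerH u * cos (π / 4 * u)) =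
    2 * (-8 / π ^ 2 * dirichletBeta 2 - 48 / π ^ 3 * (-3 / 32 * ∑' k : ℕ, 1 / (k : ℝ) ^ 3)
      + 96 / π ^ 4 * dirichletBeta 4) := by
  have h : HasSum coefI (-8 / π ^ 2 * dirichletBeta 2
      - 48 / π ^ 3 * (-3 / 32 * ∑' k : ℕ, 1 / (k : ℝ) ^ 3) + 96 / π ^ 4 * dirichletBeta 4) := by
    have := (((hasSum_odd_part 2 (by norm_num)).mul_left (-8 / π ^ 2)).sub
      (hasSum_even_part.mul_left (48 / π ^ 3))).add
      ((hasSum_odd_part 4 (by norm_num)).mul_left (96 / π ^ 4))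
    convert! this using 1
    ext k
    unfold coefI
    rcases Nat.eq_zero_or_pos k with rfl | hk
    · simp
    have : (0:ℝ) < k := by exact_mod_cast hk
    generalize sin (k * π / 2) = S
    generalize cos (k * π / 2) = C
    field_simp
    ring
  have h2 := ((h.tendsto_sum_nat.comp (Filter.tendsto_add_atTop_nat 1)).const_mul 2)
  exact tendsto_nhds_unique partial_tendsto h2

theorem stmt16 :
    ∑' n : ℕ, riemannZeta (2 * n) / ((2 * n + 1) * (2 * n + 3) * 16 ^ n) =
      -9 * riemannZeta 3 / (16 * (π : ℂ) ^ 2) + (catalanConst : ℂ) / (π : ℂ) -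
        12 * (dirichletBeta 4 : ℂ) / (π : ℂ) ^ 3 := by
  have hI := partI
  have hcont : IntervalIntegrable (fun u => π / 16 * (kerH u * cos (π / 4 * u)))
      MeasureTheory.volume 0 1 := by
    apply ContinuousOn.intervalIntegrable
    rw [Set.uIcc_of_le zero_le_one]
    exact continuousOn_const.mul (kerH_cont.mul (Continuous.continuousOn (by fun_prop)))
  have hq : (∫ u in (0:ℝ)..1, (1 - u ^ 2) / 4) = 1 / 6 := by
    rw [intervalIntegral.integral_div, intervalIntegral.integral_sub (by simp) (by simp), integral_pow]
    norm_num
  rw [intervalIntegral.integral_sub (Continuous.intervalIntegrable (by fun_prop) _ _) hcont, hq,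
    intervalIntegral.integral_const_mul, integral_value] at hI
  have hz3 : riemannZeta 3 = ((∑' k : ℕ, 1 / (k : ℝ) ^ 3 : ℝ) : ℂ) := by
    have := zeta_nat_eq_tsum_of_gt_one (k := 3) (by norm_num)
    push_cast at this ⊢
    exact this
  have hG : catalanConst = dirichletBeta 2 := rfl
  obtain ⟨V, hV, hI⟩ : ∃ V : ℝ, V = (1 / 6 - π / 16 *
      (2 * (-8 / π ^ 2 * dirichletBeta 2 - 48 / π ^ 3 * (-3 / 32 * ∑' k : ℕ, 1 / (k : ℝ) ^ 3)
        + 96 / π ^ 4 * dirichletBeta 4))) ∧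
      HasSum (fun m : ℕ => zR m / 16 ^ (m + 1) * (1 / ((2 * m + 3) * (2 * m + 5)))) V :=
    ⟨_, rfl, hI⟩
  have hC := Complex.hasSum_ofReal.mpr hI
  have h0 : HasSum (fun n : ℕ => riemannZeta (2 * ((n + 1 : ℕ) : ℂ)) /
      ((2 * ((n + 1 : ℕ) : ℂ) + 1) * (2 * ((n + 1 : ℕ) : ℂ) + 3) * 16 ^ (n + 1))) (V : ℂ) := by
    convert! hC using 1
    ext n
    have := zeta_eq_shift (2 * n + 2) (by omega)
    have e : (2 * ((n + 1 : ℕ) : ℂ)) = ((2 * n + 2 : ℕ) : ℂ) := by push_cast; ring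
    rw [e, this]
    unfold zR
    push_cast
    rw [div_mul_div_comm, mul_one]
    congr 1
    ring
  have h1 := (hasSum_nat_add_iff (f := fun n : ℕ => riemannZeta (2 * (n : ℂ)) /
      ((2 * (n : ℂ) + 1) * (2 * (n : ℂ) + 3) * 16 ^ n)) 1).mp h0
  rw [h1.tsum_eq, hz3, hG, hV]
  generalize (∑' k : ℕ, 1 / (k : ℝ) ^ 3) = A
  have hpi : (π : ℂ) ≠ 0 := by exact_mod_cast pi_ne_zero
  simp [riemannZeta_zero]
  field_simp
  ring
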